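/- arXiv:2602.23763 — 8 statements merged into one kernel-verified Lean document; each statement's English description precedes it below -/
import Mathlib

section
/- For every integer ℓ ≥ 1 there exists a constant C > 0 (depending only on ℓ) such that the following holds. For all integers N ≥ 2, K ≥ 1 and T ≥ 1 satisfying (K : ℝ)^(1/ℓ) ≥ C · log N and (T : ℝ) ≥ C · K, the probability that a uniformly random function H : Fin T → ZMod N admits K distinct ℓ-element subsets of Fin T all having the same sum under H (i.e., there exist y ∈ ZMod N and pairwise distinct finsets I₁, …, I_K ⊆ Fin T, each of cardinality ℓ, with ∑_{i ∈ I_j} H i = y for every j = 1, …, K) is at most (C · T^ℓ / ((K : ℝ)^(1/ℓ) · N))^((K : ℝ)^(1/ℓ)). -/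
/-!
Call a finite family of sets *triangular* if its members can be listed so that each one contains
an element outside the union of its predecessors.

* The sums of `H` over a triangular family of `m` sets are independent and uniform, so they all
  equal a prescribed `y` with probability at most `N⁻ᵐ` (`Triangular.card_solutions_mul_le`).
* An `ℓ`-uniform family whose triangular subfamilies all have at most `r` members has at most
  `r ^ ℓ` members (`card_le_pow_of_triangular_le`). Hence `K` distinct `ℓ`-sets always contain a
  triangular subfamily of exactly `m = ⌈K^(1/ℓ)⌉` sets.

A union bound over `y` and over the `m`-element families of `ℓ`-sets bounds the probability by
`N · (T^ℓ choose m) · N⁻ᵐ ≤ N · (e T^ℓ / (m N))^m`. Since `log N ≤ K^(1/ℓ) ≤ m`, the leading factor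
`N` is at most `e^m`, and the theorem holds with `C = e²`: if the base of the right-hand side is at
least `1` the bound is trivial, and otherwise the exponent `m` may be lowered to `K^(1/ℓ)`.
-/

open Finset
open scoped Classical

/-- Probability of an event under the uniform distribution on a finite type. -/
noncomputable def uniformPr {α : Type*} [Fintype α] (p : α → Prop) : ℝ :=
  ((Finset.univ.filter p).card : ℝ) / (Fintype.card α : ℝ)

/-- A finite family of sets that can be built up by adding, one at a time, a set that is not
contained in the union of the sets already present. -/
inductive Triangular {α : Type*} [DecidableEq α] : Finset (Finset α) → Prop
  | empty : Triangular ∅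
  | insert (𝒲 : Finset (Finset α)) (S : Finset α) :
      Triangular 𝒲 → ¬ S ⊆ 𝒲.sup id → Triangular (insert S 𝒲)

section Triangular

variable {α : Type*} [DecidableEq α]

lemma not_mem_of_not_subset_sup {𝒲 : Finset (Finset α)} {S : Finset α}
    (h : ¬ S ⊆ 𝒲.sup id) : S ∉ 𝒲 :=
  fun hS => h (Finset.le_sup (f := id) hS)

lemma Triangular.exists_subset_card_eq {𝒲 : Finset (Finset α)} (h : Triangular 𝒲) :
    ∀ m ≤ 𝒲.card, ∃ 𝒱 ⊆ 𝒲, Triangular 𝒱 ∧ 𝒱.card = m := by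
  induction h with
  | empty =>
    intro m hm
    exact ⟨∅, subset_rfl, .empty, by simpa [eq_comm] using hm⟩
  | insert 𝒲 S h𝒲 hS ih =>
    intro m hm
    rw [Finset.card_insert_of_notMem (not_mem_of_not_subset_sup hS)] at hm
    rcases Nat.lt_or_ge 𝒲.card m with hlt | hge
    · refine ⟨_, subset_rfl, .insert 𝒲 S h𝒲 hS, ?_⟩
      rw [Finset.card_insert_of_notMem (not_mem_of_not_subset_sup hS)]
      omega
    · obtain ⟨𝒱, h𝒱, ht, hc⟩ := ih m hge
      exact ⟨𝒱, h𝒱.trans (Finset.subset_insert _ _), ht, hc⟩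

lemma Triangular.image_union {𝒱 : Finset (Finset α)} (h : Triangular 𝒱) (D : Finset α) :
    (∀ V ∈ 𝒱, Disjoint V D) → Triangular (𝒱.image (· ∪ D)) := by
  induction h with
  | empty => intro _; simpa using Triangular.empty
  | insert 𝒱 S h𝒱 hS ih =>
    intro hD
    rw [Finset.image_insert]
    refine .insert _ _ (ih fun V hV => hD V (Finset.mem_insert_of_mem hV)) ?_
    obtain ⟨x, hxS, hx⟩ := Finset.not_subset.1 hS
    have hxD : x ∉ D := Finset.disjoint_left.1 (hD S (Finset.mem_insert_self _ _)) hxS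
    intro hsub
    have := hsub (Finset.mem_union_left D hxS)
    simp only [Finset.mem_sup, Finset.mem_image, id] at this hx
    obtain ⟨_, ⟨V, hV, rfl⟩, hxV⟩ := this
    rcases Finset.mem_union.1 hxV with h | h
    · exact hx ⟨V, hV, h⟩
    · exact hxD h

/-- The triangular family is grown greedily: each new set `S₀` minimises the number of elements
`D = S₀ \ U` outside the current union `U`. By minimality every set newly covered by `U ∪ S₀`
contains all of `D`, so these sets correspond to a family of `(ℓ - |D|)`-subsets of `U`, to which
the induction on `ℓ` applies. Thus each of the at most `r` steps covers at most `r ^ (ℓ - 1)` new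
sets. -/
lemma card_le_pow_of_triangular_le (r : ℕ) : ∀ (ℓ : ℕ) (𝒮 : Finset (Finset α)),
    (∀ S ∈ 𝒮, S.card = ℓ) → (∀ 𝒲 ⊆ 𝒮, Triangular 𝒲 → 𝒲.card ≤ r) → 𝒮.card ≤ r ^ ℓ := by
  intro ℓ
  induction ℓ using Nat.strong_induction_on with
  | _ ℓ ihℓ =>
  intro 𝒮 hcard hr
  rcases Nat.eq_zero_or_pos ℓ with rfl | hℓ
  · rw [pow_zero, Finset.card_le_one]
    intro a ha b hb
    rw [Finset.card_eq_zero.1 (hcard a ha), Finset.card_eq_zero.1 (hcard b hb)]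
  have greedy : ∀ n : ℕ, ∃ 𝒲 ⊆ 𝒮, Triangular 𝒲 ∧
      (𝒮.filter (· ⊆ 𝒲.sup id)).card ≤ 𝒲.card * r ^ (ℓ - 1) ∧
      (𝒲.card = n ∨ ∀ S ∈ 𝒮, S ⊆ 𝒲.sup id) := by
    intro n
    induction n with
    | zero =>
      refine ⟨∅, Finset.empty_subset _, .empty, ?_, Or.inl rfl⟩
      rw [Finset.card_empty, zero_mul, Nat.le_zero, Finset.card_eq_zero,
        Finset.filter_eq_empty_iff]
      intro S hS hsub
      have h0 : S = ∅ := by simpa using hsub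
      have := hcard S hS
      rw [h0, Finset.card_empty] at this
      omega
    | succ n ih =>
      obtain ⟨𝒲, h𝒲, ht, hle, hn | hall⟩ := ih
      swap
      · exact ⟨𝒲, h𝒲, ht, hle, Or.inr hall⟩
      by_cases hall : ∀ S ∈ 𝒮, S ⊆ 𝒲.sup id
      · exact ⟨𝒲, h𝒲, ht, hle, Or.inr hall⟩
      push Not at hall
      set U := 𝒲.sup id with hU
      obtain ⟨S₁, hS₁, hS₁U⟩ := hall
      obtain ⟨S₀, hS₀, hmin⟩ := Finset.exists_min_image (𝒮.filter fun S => ¬ S ⊆ U)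
        (fun S => (S \ U).card) ⟨S₁, Finset.mem_filter.2 ⟨hS₁, hS₁U⟩⟩
      obtain ⟨hS₀𝒮, hS₀U⟩ := Finset.mem_filter.1 hS₀
      have hnot : S₀ ∉ 𝒲 := not_mem_of_not_subset_sup hS₀U
      have ht' : Triangular (insert S₀ 𝒲) := .insert _ _ ht hS₀U
      have hsub' : insert S₀ 𝒲 ⊆ 𝒮 := Finset.insert_subset hS₀𝒮 h𝒲
      have hr1 : 1 ≤ r := by
        have := hr _ hsub' ht'
        rw [Finset.card_insert_of_notMem hnot] at this
        omega
      refine ⟨insert S₀ 𝒲, hsub', ht', ?_, Or.inl (by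
        rw [Finset.card_insert_of_notMem hnot, hn])⟩
      rw [Finset.card_insert_of_notMem hnot, Finset.sup_insert, ← hU]
      set D := S₀ \ U with hD
      have hDpos : 0 < D.card := Finset.card_pos.2 (Finset.sdiff_nonempty.2 hS₀U)
      have hDle : D.card ≤ ℓ := (hcard S₀ hS₀𝒮) ▸ Finset.card_le_card Finset.sdiff_subset
      -- the sets that become covered when `S₀` is added
      set 𝒩 := 𝒮.filter fun S => S \ U = D with h𝒩
      have hsplit : 𝒮.filter (· ⊆ id S₀ ⊔ U) ⊆ 𝒮.filter (· ⊆ U) ∪ 𝒩 := by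
        intro S hS
        obtain ⟨hS𝒮, hSsub⟩ := Finset.mem_filter.1 hS
        by_cases hSU : S ⊆ U
        · exact Finset.mem_union_left _ (Finset.mem_filter.2 ⟨hS𝒮, hSU⟩)
        · refine Finset.mem_union_right _ (Finset.mem_filter.2 ⟨hS𝒮, ?_⟩)
          refine Finset.eq_of_subset_of_card_le ?_
            (hmin S (Finset.mem_filter.2 ⟨hS𝒮, hSU⟩))
          intro x hx
          obtain ⟨hxS, hxU⟩ := Finset.mem_sdiff.1 hx
          rcases Finset.mem_union.1 (hSsub hxS) with h | h
          · exact Finset.mem_sdiff.2 ⟨h, hxU⟩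
          · exact absurd h hxU
      have hrec : ∀ S ∈ 𝒩, (S ∩ U) ∪ D = S := by
        intro S hS
        rw [← (Finset.mem_filter.1 hS).2, Finset.union_comm, Finset.sdiff_union_inter]
      have hlink : (𝒩.image (· ∩ U)).card = 𝒩.card := by
        refine Finset.card_image_of_injOn ?_
        intro A hA B hB hAB
        rw [← hrec A hA, ← hrec B hB]
        exact congrArg (· ∪ D) hAB
      have hdisj : ∀ A : Finset α, Disjoint (A ∩ U) D := fun A =>
        Finset.disjoint_sdiff.mono_left Finset.inter_subset_right
      have hnew : 𝒩.card ≤ r ^ (ℓ - 1) := by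
        rw [← hlink]
        refine (ihℓ (ℓ - D.card) (by omega) _ ?_ ?_).trans
          (Nat.pow_le_pow_right hr1 (by omega))
        · intro L hL
          obtain ⟨S, hS, rfl⟩ := Finset.mem_image.1 hL
          have h1 := Finset.card_sdiff_add_card_inter S U
          rw [(Finset.mem_filter.1 hS).2, hcard S (Finset.mem_filter.1 hS).1] at h1
          omega
        · intro 𝒱 h𝒱 ht𝒱
          have hd : ∀ V ∈ 𝒱, Disjoint V D := by
            intro V hV
            obtain ⟨S, -, rfl⟩ := Finset.mem_image.1 (h𝒱 hV)
            exact hdisj S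
          have hc : (𝒱.image (· ∪ D)).card = 𝒱.card := by
            refine Finset.card_image_of_injOn ?_
            intro A hA B hB hAB
            have hAB' : A ∪ D = B ∪ D := hAB
            rw [← Finset.union_sdiff_cancel_right (hd A hA), hAB',
              Finset.union_sdiff_cancel_right (hd B hB)]
          rw [← hc]
          refine hr _ ?_ (ht𝒱.image_union D hd)
          intro W hW
          obtain ⟨V, hV, rfl⟩ := Finset.mem_image.1 hW
          obtain ⟨S, hS, rfl⟩ := Finset.mem_image.1 (h𝒱 hV)
          rw [hrec S hS]
          exact (Finset.mem_filter.1 hS).1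
      calc (𝒮.filter (· ⊆ id S₀ ⊔ U)).card
          ≤ (𝒮.filter (· ⊆ U) ∪ 𝒩).card := Finset.card_le_card hsplit
        _ ≤ (𝒮.filter (· ⊆ U)).card + 𝒩.card := Finset.card_union_le _ _
        _ ≤ 𝒲.card * r ^ (ℓ - 1) + r ^ (ℓ - 1) := Nat.add_le_add hle hnew
        _ = (𝒲.card + 1) * r ^ (ℓ - 1) := by ring
  obtain ⟨𝒲, h𝒲, ht, hle, hn | hall⟩ := greedy (r + 1)
  · have := hr 𝒲 h𝒲 ht
    omega
  · rw [Finset.filter_true_of_mem hall] at hle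
    calc 𝒮.card ≤ 𝒲.card * r ^ (ℓ - 1) := hle
      _ ≤ r * r ^ (ℓ - 1) := Nat.mul_le_mul_right _ (hr 𝒲 h𝒲 ht)
      _ = r ^ ℓ := by rw [← pow_succ']; congr 1; omega

/-- When a set `S` with an element `i` outside all earlier sets is added, shifting `H i` by an
arbitrary amount preserves the earlier constraints, while the sum over `S` reveals the shift. -/
lemma Triangular.card_solutions_mul_le [Fintype α] {N : ℕ} [NeZero N] (y : ZMod N)
    {𝒲 : Finset (Finset α)} (h : Triangular 𝒲) :
    (Finset.univ.filter fun H : α → ZMod N => ∀ S ∈ 𝒲, ∑ i ∈ S, H i = y).card * N ^ 𝒲.card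
      ≤ Fintype.card (α → ZMod N) := by
  induction h with
  | empty => simp
  | insert 𝒲 S h𝒲 hS ih =>
    refine le_trans ?_ ih
    rw [Finset.card_insert_of_notMem (not_mem_of_not_subset_sup hS), pow_succ', ← mul_assoc]
    refine Nat.mul_le_mul_right _ ?_
    obtain ⟨i, hiS, hi⟩ := Finset.not_subset.1 hS
    have hi' : ∀ S' ∈ 𝒲, i ∉ S' := fun S' hS' hiS' =>
      hi (Finset.le_sup (f := id) hS' hiS')
    have hN : (Finset.univ : Finset (ZMod N)).card = N := by
      rw [Finset.card_univ, ZMod.card]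
    refine (congrArg _ hN.symm).trans_le ?_
    rw [← Finset.card_product]
    refine Finset.card_le_card_of_injOn (fun p => p.1 + Pi.single i p.2) ?_ ?_
    · rintro ⟨H, c⟩ hp
      simp only [Finset.coe_product, Finset.coe_filter, Finset.mem_univ, true_and,
        Set.mem_prod, Set.mem_ofPred_eq, Finset.mem_insert, forall_eq_or_imp] at hp ⊢
      intro S' hS'
      simp only [Pi.add_apply, Finset.sum_add_distrib, Finset.sum_pi_single', hi' S' hS',
        if_false, add_zero]
      exact hp.1.2 S' hS'
    · rintro ⟨H, c⟩ hp ⟨H', c'⟩ hp' heq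
      simp only [Finset.coe_product, Finset.coe_filter, Finset.mem_univ, true_and,
        Set.mem_prod, Set.mem_ofPred_eq, Finset.mem_insert, forall_eq_or_imp] at hp hp' heq
      have hsum := congrArg (fun G : α → ZMod N => ∑ j ∈ S, G j) heq
      simp only [Pi.add_apply, Finset.sum_add_distrib, Finset.sum_pi_single', hiS,
        if_true, hp.1.1, hp'.1.1, add_right_inj] at hsum
      subst hsum
      simpa using heq

end Triangular

/-- The union bound over the common value `y` and over the `m`-element families of `ℓ`-sets. -/
lemma card_event_mul_le (ℓ N K T m : ℕ) [NeZero N]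
    (hm : ∀ r < m, r ^ ℓ < K) :
    (Finset.univ.filter (fun H : Fin T → ZMod N =>
            ∃ y : ZMod N, ∃ 𝒮 : Finset (Finset (Fin T)),
              𝒮.card = K ∧ ∀ I ∈ 𝒮, I.card = ℓ ∧ (∑ i ∈ I, H i) = y)).card * N ^ m
      ≤ N * ((T.choose ℓ).choose m * Fintype.card (Fin T → ZMod N)) := by
  set F := (Finset.powersetCard m (Finset.powersetCard ℓ (Finset.univ : Finset (Fin T)))).filter
    Triangular with hF
  have hFc : F.card ≤ (T.choose ℓ).choose m := by
    refine (Finset.card_filter_le _ _).trans ?_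
    rw [Finset.card_powersetCard, Finset.card_powersetCard, Finset.card_univ, Fintype.card_fin]
  have hsub : (Finset.univ.filter (fun H : Fin T → ZMod N =>
            ∃ y : ZMod N, ∃ 𝒮 : Finset (Finset (Fin T)),
              𝒮.card = K ∧ ∀ I ∈ 𝒮, I.card = ℓ ∧ (∑ i ∈ I, H i) = y)) ⊆
      ((Finset.univ : Finset (ZMod N)) ×ˢ F).biUnion fun p =>
        Finset.univ.filter fun H : Fin T → ZMod N => ∀ S ∈ p.2, ∑ i ∈ S, H i = p.1 := by
    intro H hH
    obtain ⟨y, 𝒮, hK, h𝒮⟩ := (Finset.mem_filter.1 hH).2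
    have hex : ∃ 𝒲 ⊆ 𝒮, Triangular 𝒲 ∧ m ≤ 𝒲.card := by
      by_contra! hcon
      rcases Nat.eq_zero_or_pos m with h0 | hpos
      · have := hcon ∅ (Finset.empty_subset _) .empty
        omega
      · have h1 := card_le_pow_of_triangular_le (m - 1) ℓ 𝒮 (fun S hS => (h𝒮 S hS).1)
          (fun 𝒲 h1 h2 => by have := hcon 𝒲 h1 h2; omega)
        have h2 := hm (m - 1) (by omega)
        omega
    obtain ⟨𝒲, h𝒲, ht, hmc⟩ := hex
    obtain ⟨𝒱, h𝒱, ht', hc⟩ := ht.exists_subset_card_eq m hmc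
    refine Finset.mem_biUnion.2 ⟨(y, 𝒱), Finset.mem_product.2 ⟨Finset.mem_univ _, ?_⟩, ?_⟩
    · refine Finset.mem_filter.2 ⟨Finset.mem_powersetCard.2 ⟨?_, hc⟩, ht'⟩
      intro S hS
      exact Finset.mem_powersetCard.2 ⟨Finset.subset_univ _, (h𝒮 S (h𝒲 (h𝒱 hS))).1⟩
    · exact Finset.mem_filter.2 ⟨Finset.mem_univ _, fun S hS => (h𝒮 S (h𝒲 (h𝒱 hS))).2⟩
  calc _ ≤ (∑ p ∈ (Finset.univ : Finset (ZMod N)) ×ˢ F, (Finset.univ.filter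
            fun H : Fin T → ZMod N => ∀ S ∈ p.2, ∑ i ∈ S, H i = p.1).card) * N ^ m :=
        Nat.mul_le_mul_right _ ((Finset.card_le_card hsub).trans Finset.card_biUnion_le)
    _ ≤ ∑ p ∈ (Finset.univ : Finset (ZMod N)) ×ˢ F, Fintype.card (Fin T → ZMod N) := by
        rw [Finset.sum_mul]
        refine Finset.sum_le_sum fun p hp => ?_
        obtain ⟨h1, h2⟩ := Finset.mem_filter.1 (Finset.mem_product.1 hp).2
        have h3 := h2.card_solutions_mul_le p.1
        rw [(Finset.mem_powersetCard.1 h1).2] at h3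
        convert h3
    _ = N * (F.card * Fintype.card (Fin T → ZMod N)) := by
        rw [Finset.sum_const, Finset.card_product, Finset.card_univ, ZMod.card, smul_eq_mul,
          mul_assoc]
    _ ≤ _ := Nat.mul_le_mul_left _ (Nat.mul_le_mul_right _ hFc)

/-- For every `ℓ ≥ 1` there is a constant `C > 0` such that for all `N ≥ 2`, `K ≥ 1`,
`T ≥ 1` with `K^(1/ℓ) ≥ C log N` and `T ≥ C K`, the probability that a uniformly random
`H : Fin T → ZMod N` admits `K` distinct `ℓ`-element subsets of `Fin T` all with the same
sum under `H` is at most `(C T^ℓ / (K^(1/ℓ) N))^(K^(1/ℓ))`. -/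
theorem nested_collision_classical_time_bound :
    ∀ ℓ : ℕ, 1 ≤ ℓ → ∃ C : ℝ, 0 < C ∧
      ∀ (N K T : ℕ) [NeZero N], 2 ≤ N → 1 ≤ K → 1 ≤ T →
        C * Real.log N ≤ (K : ℝ) ^ ((1 : ℝ) / (ℓ : ℝ)) →
        C * (K : ℝ) ≤ (T : ℝ) →
        uniformPr (fun H : Fin T → ZMod N =>
            ∃ y : ZMod N, ∃ 𝒮 : Finset (Finset (Fin T)),
              𝒮.card = K ∧ ∀ I ∈ 𝒮, I.card = ℓ ∧ (∑ i ∈ I, H i) = y)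
          ≤ (C * (T : ℝ) ^ ℓ / ((K : ℝ) ^ ((1 : ℝ) / (ℓ : ℝ)) * (N : ℝ)))
              ^ ((K : ℝ) ^ ((1 : ℝ) / (ℓ : ℝ))) := by
  intro ℓ hℓ
  refine ⟨Real.exp 2, Real.exp_pos _, ?_⟩
  intro N K T _ hN hK hT hlog _
  set k : ℝ := (K : ℝ) ^ ((1 : ℝ) / (ℓ : ℝ)) with hk
  have hKpos : (0 : ℝ) < K := by exact_mod_cast hK
  have hkpos : 0 < k := Real.rpow_pos_of_pos hKpos _
  have hNpos : (0 : ℝ) < N := by exact_mod_cast (by omega : 0 < N)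
  have hTpos : (0 : ℝ) < T := by exact_mod_cast hT
  have hkℓ : k ^ ℓ = K := by
    rw [hk, one_div, Real.rpow_inv_natCast_pow hKpos.le (by omega)]
  set m := ⌈k⌉₊ with hm
  have hkm : k ≤ m := Nat.le_ceil k
  have hmpos : (0 : ℝ) < m := hkpos.trans_le hkm
  have hcount := card_event_mul_le ℓ N K T m (by
    intro r hr
    have h1 : (r : ℝ) < k := Nat.lt_ceil.1 hr
    have h2 : (r : ℝ) ^ ℓ < k ^ ℓ := pow_lt_pow_left₀ h1 (Nat.cast_nonneg r) (by omega)
    rw [hkℓ] at h2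
    exact_mod_cast h2)
  set X := Real.exp 2 * (T : ℝ) ^ ℓ / (k * N) with hX
  have hXpos : 0 < X := by positivity
  have hcardpos : (0 : ℝ) < Fintype.card (Fin T → ZMod N) := by
    exact_mod_cast Fintype.card_pos
  unfold uniformPr
  rcases le_total 1 X with hX1 | hX1
  · refine le_trans ?_ (Real.one_le_rpow hX1 hkpos.le)
    rw [div_le_one hcardpos]
    exact_mod_cast Finset.card_le_univ _
  refine le_trans ?_ (Real.rpow_le_rpow_of_exponent_ge hXpos hX1 hkm)
  rw [Real.rpow_natCast, div_le_iff₀ hcardpos]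
  have hcount' := (Nat.cast_le (α := ℝ)).2 hcount
  push_cast only [Nat.cast_mul, Nat.cast_pow] at hcount'
  have hNm : (0 : ℝ) < (N : ℝ) ^ m := by positivity
  refine le_of_mul_le_mul_right (le_trans (le_of_eq ?_) (hcount'.trans ?_)) hNm
  -- the two sides differ only in their decidability instances
  · congr!
  have hNexp : (N : ℝ) ≤ Real.exp m := by
    rw [← Real.log_le_iff_le_exp hNpos]
    have h1 : (1 : ℝ) ≤ Real.exp 2 := Real.one_le_exp (by norm_num)
    have h2 : 0 ≤ Real.log N := Real.log_nonneg (by exact_mod_cast (by omega : 1 ≤ N))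
    nlinarith
  have hfac : (0 : ℝ) < m.factorial := by exact_mod_cast Nat.factorial_pos m
  have hchoose : ((T.choose ℓ).choose m : ℝ) ≤ ((T : ℝ) ^ ℓ) ^ m * Real.exp m / k ^ m := by
    have h1 : ((T.choose ℓ).choose m : ℝ) ≤ (T.choose ℓ : ℝ) ^ m / m.factorial :=
      Nat.choose_le_pow_div m (T.choose ℓ)
    have h2 : (T.choose ℓ : ℝ) ≤ (T : ℝ) ^ ℓ := by exact_mod_cast Nat.choose_le_pow T ℓ
    have h3 : (m : ℝ) ^ m / m.factorial ≤ Real.exp m :=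
      Real.pow_div_factorial_le_exp m hmpos.le m
    have h4 : k ^ m ≤ (m : ℝ) ^ m := pow_le_pow_left₀ hkpos.le hkm m
    have h5 : 1 / (m.factorial : ℝ) ≤ Real.exp m / k ^ m := by
      rw [div_le_div_iff₀ hfac (by positivity)]
      rw [div_le_iff₀ hfac] at h3
      linarith
    calc _ ≤ (T.choose ℓ : ℝ) ^ m / m.factorial := h1
      _ ≤ ((T : ℝ) ^ ℓ) ^ m / m.factorial := by gcongr
      _ = ((T : ℝ) ^ ℓ) ^ m * (1 / m.factorial) := by ring
      _ ≤ ((T : ℝ) ^ ℓ) ^ m * (Real.exp m / k ^ m) := by gcongr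
      _ = _ := by ring
  have hexp : Real.exp 2 ^ m = Real.exp m * Real.exp m := by
    rw [← Real.exp_nat_mul, ← Real.exp_add]; congr 1; ring
  calc (N : ℝ) * (((T.choose ℓ).choose m : ℝ) * (Fintype.card (Fin T → ZMod N) : ℝ))
      ≤ Real.exp m * ((((T : ℝ) ^ ℓ) ^ m * Real.exp m / k ^ m) *
          (Fintype.card (Fin T → ZMod N) : ℝ)) := by gcongr
    _ = X ^ m * (Fintype.card (Fin T → ZMod N) : ℝ) * (N : ℝ) ^ m := by
      rw [hX, div_pow, mul_pow, mul_pow, hexp]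
      field_simp
end

section
/- Let N ≥ 2, ℓ ≥ 1 and T ≥ ℓ be integers and fix y ∈ ZMod N. For a uniformly random function H : Fin T → ZMod N, let K_y(H) denote the number of ℓ-element finsets I ⊆ Fin T with ∑_{i ∈ I} H i = y. Then the probability that (K_y(H) : ℝ) ≤ (choose T ℓ) / (2N) is at most 4(N − 1) / (choose T ℓ). In particular, if choose T ℓ ≥ 4·N·(N−1), then with probability at least 1 − 1/N one has K_y(H) > (choose T ℓ)/(2N). -/
/-!
This is Chebyshev's inequality for `K_y = ∑_I 1[S_I = y]`, where `I` ranges over the `M = choose T ℓ`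
subsets of size `ℓ` and `S_I(H) = ∑_{i ∈ I} H i`. The sums `S_I` are uniform and pairwise
independent: for `I ≠ J` of equal size there are `a ∈ I \ J` and `b ∈ J \ I`, so the homomorphism
`H ↦ (S_I H, S_J H)` onto `ZMod N × ZMod N` is surjective and all its fibres have the same size
(`card_fiber_mul_card`). Hence the covariances vanish (`sum_centered_mul`), the variance of `K_y`
is `M (1/N - 1/N²)` (`sum_sq_tupleCount_sub`), and a deviation of at least `M / (2N)` below the mean
`M / N` has probability at most `4 (N - 1) / M`.
-/

open Finset
open scoped Classical

/-- The number of `ℓ`-element finsets of `Fin T` whose sum under `H` equals `y`. -/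
noncomputable def tupleCount (N ℓ T : ℕ) (H : Fin T → ZMod N) (y : ZMod N) : ℕ :=
  (Finset.univ.filter (fun I : Finset (Fin T) => I.card = ℓ ∧ (∑ i ∈ I, H i) = y)).card

/-- All fibres of a surjective homomorphism of finite groups have size `|G| / |A|`. -/
lemma card_fiber_mul_card {G A : Type*} [AddGroup G] [Fintype G] [AddGroup A] [Fintype A]
    (f : G →+ A) (hf : Function.Surjective f) (a : A) :
    (univ.filter (fun g => f g = a)).card * Fintype.card A = Fintype.card G := by
  have h : Fintype.card G = ∑ b : A, (univ.filter (fun g => f g = b)).card := by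
    rw [← Finset.card_univ]
    exact Finset.card_eq_sum_card_fiberwise (fun _ _ => by simp)
  rw [h, Finset.sum_congr rfl (fun b _ => AddMonoidHom.card_fiber_eq_of_mem_range f
    (Set.mem_range.2 (hf b)) (Set.mem_range.2 (hf a)))]
  simp [mul_comm]

/-- The homomorphism `H ↦ ∑ i ∈ I, H i`. -/
def sumHom (N T : ℕ) (I : Finset (Fin T)) : (Fin T → ZMod N) →+ ZMod N where
  toFun H := ∑ i ∈ I, H i
  map_zero' := by simp
  map_add' := by simp [Finset.sum_add_distrib]

lemma sumHom_surjective (N : ℕ) {T : ℕ} {I : Finset (Fin T)} (hI : I.Nonempty) :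
    Function.Surjective (sumHom N T I) := by
  intro u
  obtain ⟨a, ha⟩ := hI
  exact ⟨Pi.single a u, by simp [sumHom, ha]⟩

lemma sumHom_prod_surjective (N : ℕ) {T : ℕ} {I J : Finset (Fin T)} (hIJ : I.card = J.card)
    (hne : I ≠ J) : Function.Surjective ((sumHom N T I).prod (sumHom N T J)) := by
  rintro ⟨u, v⟩
  have h1 : ¬ I ⊆ J := fun h => hne (Finset.eq_of_subset_of_card_le h hIJ.ge)
  have h2 : ¬ J ⊆ I := fun h => hne (Finset.eq_of_subset_of_card_le h hIJ.le).symm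
  obtain ⟨a, haI, haJ⟩ := Finset.not_subset.1 h1
  obtain ⟨b, hbJ, hbI⟩ := Finset.not_subset.1 h2
  refine ⟨Pi.single a u + Pi.single b v, ?_⟩
  simp [sumHom, Finset.sum_add_distrib, haI, haJ, hbI, hbJ]

/-- The indicator of `∑ i ∈ I, H i = y`, minus its mean `1 / N`. -/
noncomputable def centered (N T : ℕ) (y : ZMod N) (I : Finset (Fin T)) (H : Fin T → ZMod N) : ℝ :=
  (if ∑ i ∈ I, H i = y then 1 else 0) - 1 / (N : ℝ)

lemma sum_indicator (N T : ℕ) [NeZero N] (y : ZMod N) {I : Finset (Fin T)} (hI : I.Nonempty) :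
    ∑ H : Fin T → ZMod N, (if ∑ i ∈ I, H i = y then (1 : ℝ) else 0)
      = Fintype.card (Fin T → ZMod N) / (N : ℝ) := by
  have hN : (N : ℝ) ≠ 0 := Nat.cast_ne_zero.2 (NeZero.ne N)
  have h := card_fiber_mul_card (sumHom N T I) (sumHom_surjective N hI) y
  rw [ZMod.card] at h
  rw [Finset.sum_boole, eq_div_iff hN, ← h, Nat.cast_mul]
  congr 3
  ext H
  simp only [Finset.mem_filter, Finset.mem_univ, true_and]
  rfl

lemma sum_indicator_mul (N T : ℕ) [NeZero N] (y : ZMod N) {I J : Finset (Fin T)}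
    (hIJ : I.card = J.card) (hne : I ≠ J) :
    ∑ H : Fin T → ZMod N, (if ∑ i ∈ I, H i = y then (1 : ℝ) else 0)
        * (if ∑ i ∈ J, H i = y then (1 : ℝ) else 0)
      = Fintype.card (Fin T → ZMod N) / (N : ℝ) ^ 2 := by
  have hN : (N : ℝ) ^ 2 ≠ 0 := pow_ne_zero _ (Nat.cast_ne_zero.2 (NeZero.ne N))
  have h := card_fiber_mul_card _ (sumHom_prod_surjective N hIJ hne) (y, y)
  rw [Fintype.card_prod, ZMod.card, ← pow_two] at h
  simp_rw [ite_zero_mul_ite_zero, mul_one]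
  rw [Finset.sum_boole, eq_div_iff hN, ← h, Nat.cast_mul, Nat.cast_pow]
  congr 3
  ext H
  simp [sumHom]

/-- The covariances of the indicators, multiplied by the number of functions `H`. -/
lemma sum_centered_mul (N T : ℕ) [NeZero N] (y : ZMod N) {I J : Finset (Fin T)}
    (hI : I.Nonempty) (hIJ : I.card = J.card) :
    ∑ H : Fin T → ZMod N, centered N T y I H * centered N T y J H
      = if I = J then Fintype.card (Fin T → ZMod N) * (1 / (N : ℝ) - 1 / (N : ℝ) ^ 2) else 0 := by
  have hN : (N : ℝ) ≠ 0 := Nat.cast_ne_zero.2 (NeZero.ne N)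
  have hJ : J.Nonempty := Finset.card_pos.1 (hIJ ▸ Finset.card_pos.2 hI)
  have e : ∀ H : Fin T → ZMod N, centered N T y I H * centered N T y J H
      = (if ∑ i ∈ I, H i = y then (1 : ℝ) else 0) * (if ∑ i ∈ J, H i = y then (1 : ℝ) else 0)
        - 1 / (N : ℝ) * (if ∑ i ∈ I, H i = y then (1 : ℝ) else 0)
        - 1 / (N : ℝ) * (if ∑ i ∈ J, H i = y then (1 : ℝ) else 0) + 1 / (N : ℝ) ^ 2 := by
    intro H
    unfold centered
    ring
  simp_rw [e]
  rw [Finset.sum_add_distrib, Finset.sum_sub_distrib, Finset.sum_sub_distrib, ← Finset.mul_sum,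
    ← Finset.mul_sum, sum_indicator N T y hI, sum_indicator N T y hJ, Finset.sum_const,
    Finset.card_univ, nsmul_eq_mul]
  split_ifs with h
  · subst h
    simp_rw [ite_zero_mul_ite_zero, mul_one, and_self]
    rw [sum_indicator N T y hI]
    field_simp
    ring
  · rw [sum_indicator_mul N T y hIJ h]
    field_simp
    ring

lemma tupleCount_sub (N ℓ T : ℕ) (H : Fin T → ZMod N) (y : ZMod N) :
    (tupleCount N ℓ T H y : ℝ) - (T.choose ℓ : ℝ) / N
      = ∑ I ∈ powersetCard ℓ (univ : Finset (Fin T)), centered N T y I H := by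
  unfold centered
  rw [Finset.sum_sub_distrib, Finset.sum_boole, Finset.sum_const, card_powersetCard, card_univ,
    Fintype.card_fin, nsmul_eq_mul, mul_one_div]
  unfold tupleCount
  congr 3
  ext I
  simp [mem_powersetCard]

/-- The variance of `tupleCount`, multiplied by the number of functions `H`. -/
lemma sum_sq_tupleCount_sub (N ℓ T : ℕ) [NeZero N] (hℓ : 1 ≤ ℓ) (y : ZMod N) :
    ∑ H : Fin T → ZMod N, ((tupleCount N ℓ T H y : ℝ) - (T.choose ℓ : ℝ) / N) ^ 2
      = T.choose ℓ * (Fintype.card (Fin T → ZMod N) * (1 / (N : ℝ) - 1 / (N : ℝ) ^ 2)) := by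
  simp_rw [tupleCount_sub, pow_two, Finset.sum_mul_sum]
  rw [Finset.sum_comm]
  have key : ∀ I ∈ powersetCard ℓ (univ : Finset (Fin T)),
      ∑ H : Fin T → ZMod N, ∑ J ∈ powersetCard ℓ (univ : Finset (Fin T)),
        centered N T y I H * centered N T y J H
      = Fintype.card (Fin T → ZMod N) * (1 / (N : ℝ) - 1 / (N : ℝ) ^ 2) := by
    intro I hI
    have hc := (mem_powersetCard.1 hI).2
    rw [Finset.sum_comm, Finset.sum_congr rfl (fun J hJ => sum_centered_mul N T y
      (Finset.card_pos.1 (by omega)) (hc.trans (mem_powersetCard.1 hJ).2.symm)),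
      Finset.sum_ite_eq, if_pos hI]
  rw [Finset.sum_congr rfl key, Finset.sum_const, card_powersetCard, card_univ,
    Fintype.card_fin, nsmul_eq_mul]
  ring

lemma uniformPr_add_compl {α : Type*} [Fintype α] [Nonempty α] (p q : α → Prop)
    (h : ∀ a, q a ↔ ¬ p a) : uniformPr p + uniformPr q = 1 := by
  have hq : q = fun a => ¬ p a := funext fun a => propext (h a)
  subst hq
  unfold uniformPr
  rw [← add_div, ← Nat.cast_add, Finset.card_filter_add_card_filter_not, Finset.card_univ]
  exact div_self (Nat.cast_ne_zero.2 Fintype.card_ne_zero)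

lemma uniformPr_tupleCount_le (N ℓ T : ℕ) [NeZero N] (hℓ : 1 ≤ ℓ) (hT : ℓ ≤ T) (y : ZMod N) :
    uniformPr (fun H : Fin T → ZMod N =>
        (tupleCount N ℓ T H y : ℝ) ≤ (T.choose ℓ : ℝ) / (2 * (N : ℝ)))
      ≤ 4 * ((N : ℝ) - 1) / (T.choose ℓ : ℝ) := by
  have hN : (0 : ℝ) < N := Nat.cast_pos.2 (NeZero.pos N)
  have hM : (0 : ℝ) < T.choose ℓ := Nat.cast_pos.2 (Nat.choose_pos hT)
  have hC : (0 : ℝ) < Fintype.card (Fin T → ZMod N) := Nat.cast_pos.2 Fintype.card_pos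
  have hvar := sum_sq_tupleCount_sub N ℓ T hℓ y
  unfold uniformPr
  set B := univ.filter (fun H : Fin T → ZMod N =>
        (tupleCount N ℓ T H y : ℝ) ≤ (T.choose ℓ : ℝ) / (2 * (N : ℝ))) with hB
  set M : ℝ := (T.choose ℓ : ℝ)
  have hcheb : (B.card : ℝ) * (M / (2 * N)) ^ 2
      ≤ ∑ H : Fin T → ZMod N, ((tupleCount N ℓ T H y : ℝ) - M / N) ^ 2 := by
    rw [← nsmul_eq_mul, ← Finset.sum_const]
    refine (Finset.sum_le_sum fun H hH => ?_).trans
      (Finset.sum_le_sum_of_subset_of_nonneg (Finset.subset_univ B) fun _ _ _ => sq_nonneg _)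
    have hH' := (Finset.mem_filter.1 hH).2
    have h2 : M / N = M / (2 * N) + M / (2 * N) := by
      field_simp
      ring
    rw [← neg_sq ((tupleCount N ℓ T H y : ℝ) - M / N)]
    exact pow_le_pow_left₀ (by positivity) (by linarith) 2
  rw [hvar] at hcheb
  rw [div_le_div_iff₀ hC hM]
  have e1 : (B.card : ℝ) * (M / (2 * N)) ^ 2 = (B.card * M) * (M / (4 * N ^ 2)) := by
    field_simp
    ring
  have e2 : ∀ C : ℝ, M * (C * (1 / (N : ℝ) - 1 / (N : ℝ) ^ 2))
      = (4 * ((N : ℝ) - 1) * C) * (M / (4 * N ^ 2)) := by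
    intro C
    field_simp
  rw [e1, e2] at hcheb
  exact le_of_mul_le_mul_right hcheb (by positivity)

/-- For a uniformly random `H : Fin T → ZMod N`, the probability that the number of
`ℓ`-element finsets of sum `y` is at most `choose T ℓ / (2N)` is at most
`4(N-1)/choose T ℓ`; in particular if `choose T ℓ ≥ 4 N (N-1)` then with probability at
least `1 - 1/N` there are more than `choose T ℓ / (2N)` such finsets. -/
theorem many_tuples_of_sum_y (N ℓ T : ℕ) [NeZero N] (hN : 2 ≤ N) (hℓ : 1 ≤ ℓ)
    (hT : ℓ ≤ T) (y : ZMod N) :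
    (uniformPr (fun H : Fin T → ZMod N =>
        (tupleCount N ℓ T H y : ℝ) ≤ (T.choose ℓ : ℝ) / (2 * (N : ℝ)))
      ≤ 4 * ((N : ℝ) - 1) / (T.choose ℓ : ℝ))
    ∧ (4 * N * (N - 1) ≤ T.choose ℓ →
        1 - 1 / (N : ℝ) ≤ uniformPr (fun H : Fin T → ZMod N =>
          (T.choose ℓ : ℝ) / (2 * (N : ℝ)) < (tupleCount N ℓ T H y : ℝ))) := by
  refine ⟨uniformPr_tupleCount_le N ℓ T hℓ hT y, fun h => ?_⟩
  have h1 := uniformPr_tupleCount_le N ℓ T hℓ hT y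
  have h2 := uniformPr_add_compl
    (fun H : Fin T → ZMod N => (tupleCount N ℓ T H y : ℝ) ≤ (T.choose ℓ : ℝ) / (2 * (N : ℝ)))
    (fun H => (T.choose ℓ : ℝ) / (2 * (N : ℝ)) < (tupleCount N ℓ T H y : ℝ))
    (fun _ => not_le.symm)
  have hN0 : (0 : ℝ) < N := Nat.cast_pos.2 (NeZero.pos N)
  have hM : (0 : ℝ) < T.choose ℓ := Nat.cast_pos.2 (Nat.choose_pos hT)
  have h3 : 4 * ((N : ℝ) - 1) / (T.choose ℓ : ℝ) ≤ 1 / N := by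
    rw [div_le_div_iff₀ hM hN0]
    have h4 : ((4 * N * (N - 1) : ℕ) : ℝ) ≤ (T.choose ℓ : ℝ) := Nat.cast_le.2 h
    rw [Nat.cast_mul, Nat.cast_sub (by omega)] at h4
    push_cast at h4
    linarith
  linarith
end

section
/- Let N ≥ 1, ℓ ≥ 1 and T be integers and fix y ∈ ZMod N. For a uniformly random function H : Fin T → ZMod N, let K_y(H) denote the number of ℓ-element finsets I ⊆ Fin T with ∑_{i ∈ I} H i = y. Then the expectation of K_y equals (choose T ℓ)/N, and the variance of K_y equals (choose T ℓ)·(N−1)/N². -/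
/-!
Write `K_y = ∑_I 1[S_I = y]` over the `ℓ`-element sets `I`, where `S_I(H) = ∑_{i ∈ I} H i`.
If `i ∈ I \ J`, resampling the coordinate `H i` makes `S_I` uniform without changing `S_J`; hence
`E[f(S_I) g(S_J)] = (1/N ∑_c f c) E[g(S_J)]` (`uniformExp_mul_of_mem_of_notMem`). With `J = ∅`
this says that `S_I` is uniform, since `ℓ ≥ 1`, which gives the expectation and the
variance `(N-1)/N²` of each indicator. Two distinct sets `I`, `J` of the same size always admit some
`i ∈ I \ J`, so the centred indicators are pairwise uncorrelated and the variances add up.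
-/

open Finset
open scoped Classical

/-- The expectation of a real-valued random variable under the uniform distribution on a
finite type. -/
noncomputable def uniformExp {α : Type*} [Fintype α] (X : α → ℝ) : ℝ :=
  (∑ a : α, X a) / (Fintype.card α : ℝ)

/-- Translating `H` by `c` in a coordinate `i ∈ I \ J` shifts the sum over `I` by `c` and fixes the
sum over `J`; averaging over `c` shows that the sum over `I` is uniform and independent of the sum
over `J`. -/
lemma uniformExp_mul_of_mem_of_notMem {N T : ℕ} [NeZero N] {I J : Finset (Fin T)} {i : Fin T}
    (hI : i ∈ I) (hJ : i ∉ J) (f g : ZMod N → ℝ) :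
    uniformExp (fun H : Fin T → ZMod N => f (∑ k ∈ I, H k) * g (∑ k ∈ J, H k))
      = (∑ c, f c) / N * uniformExp (fun H : Fin T → ZMod N => g (∑ k ∈ J, H k)) := by
  have hN : (N : ℝ) ≠ 0 := Nat.cast_ne_zero.mpr (NeZero.ne N)
  have shift : ∀ c : ZMod N,
      ∑ H : Fin T → ZMod N, f (∑ k ∈ I, H k) * g (∑ k ∈ J, H k)
        = ∑ H : Fin T → ZMod N, f (∑ k ∈ I, H k + c) * g (∑ k ∈ J, H k) := by
    intro c
    rw [← Equiv.sum_comp (Equiv.addRight (Pi.single i c : Fin T → ZMod N))]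
    refine Finset.sum_congr rfl fun H _ => ?_
    simp [Finset.sum_add_distrib, hI, hJ]
  have avg : (N : ℝ) * ∑ H : Fin T → ZMod N, f (∑ k ∈ I, H k) * g (∑ k ∈ J, H k)
      = (∑ c, f c) * ∑ H : Fin T → ZMod N, g (∑ k ∈ J, H k) := by
    calc _ = ∑ c : ZMod N,
          ∑ H : Fin T → ZMod N, f (∑ k ∈ I, H k + c) * g (∑ k ∈ J, H k) := by
            rw [← Finset.sum_congr rfl fun c _ => shift c]
            simp [ZMod.card]
      _ = _ := by
            rw [Finset.sum_comm, Finset.mul_sum]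
            refine Finset.sum_congr rfl fun H _ => ?_
            rw [← Finset.sum_mul]
            congr 1
            exact Equiv.sum_comp (Equiv.addLeft (∑ k ∈ I, H k)) f
  unfold uniformExp
  rw [div_mul_div_comm, ← avg, mul_div_mul_left _ _ hN]

lemma uniformExp_const {N T : ℕ} [NeZero N] (r : ℝ) :
    uniformExp (fun _ : Fin T → ZMod N => r) = r := by
  have h : (Fintype.card (Fin T → ZMod N) : ℝ) ≠ 0 := Nat.cast_ne_zero.mpr Fintype.card_ne_zero
  rw [uniformExp, Finset.sum_const, Finset.card_univ, nsmul_eq_mul, mul_div_cancel_left₀ _ h]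

lemma uniformExp_sum {α ι : Type*} [Fintype α] (s : Finset ι) (X : ι → α → ℝ) :
    uniformExp (fun a => ∑ j ∈ s, X j a) = ∑ j ∈ s, uniformExp (X j) := by
  simp only [uniformExp]
  rw [Finset.sum_comm, Finset.sum_div]

lemma uniformExp_of_nonempty {N T : ℕ} [NeZero N] {I : Finset (Fin T)} (hI : I.Nonempty)
    (f : ZMod N → ℝ) :
    uniformExp (fun H : Fin T → ZMod N => f (∑ k ∈ I, H k)) = (∑ c, f c) / N := by
  obtain ⟨i, hi⟩ := hI
  have h := uniformExp_mul_of_mem_of_notMem hi (Finset.notMem_empty i) f (fun _ => 1)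
  simpa [uniformExp_const] using h

lemma tupleCount_eq_sum (N ℓ T : ℕ) (H : Fin T → ZMod N) (y : ZMod N) :
    (tupleCount N ℓ T H y : ℝ)
      = ∑ I ∈ Finset.powersetCard ℓ (Finset.univ : Finset (Fin T)),
          if ∑ i ∈ I, H i = y then (1 : ℝ) else 0 := by
  rw [Finset.sum_boole, tupleCount]
  congr 2
  ext I
  simp [Finset.mem_powersetCard]

/-- Over a uniformly random `H : Fin T → ZMod N`, the number `K_y(H)` of `ℓ`-element
finsets of `Fin T` of sum `y` has expectation `choose T ℓ / N` and variance
`choose T ℓ (N-1)/N²`. -/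
theorem tupleCount_expectation_variance (N ℓ T : ℕ) [NeZero N] (hN : 1 ≤ N)
    (hℓ : 1 ≤ ℓ) (y : ZMod N) :
    uniformExp (fun H : Fin T → ZMod N => (tupleCount N ℓ T H y : ℝ))
      = (T.choose ℓ : ℝ) / (N : ℝ)
    ∧ uniformExp (fun H : Fin T → ZMod N =>
        ((tupleCount N ℓ T H y : ℝ)
          - uniformExp (fun H' : Fin T → ZMod N => (tupleCount N ℓ T H' y : ℝ))) ^ 2)
      = (T.choose ℓ : ℝ) * ((N : ℝ) - 1) / (N : ℝ) ^ 2 := by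
  have hN0 : (N : ℝ) ≠ 0 := Nat.cast_ne_zero.mpr (NeZero.ne N)
  have hcard : (Finset.powersetCard ℓ (Finset.univ : Finset (Fin T))).card = T.choose ℓ := by
    simp
  have hne : ∀ I ∈ Finset.powersetCard ℓ (Finset.univ : Finset (Fin T)), I.Nonempty := by
    intro I hI
    rw [← Finset.card_pos, (Finset.mem_powersetCard.mp hI).2]
    exact hℓ
  have hexp : uniformExp (fun H : Fin T → ZMod N => (tupleCount N ℓ T H y : ℝ))
      = (T.choose ℓ : ℝ) / (N : ℝ) := by
    simp only [tupleCount_eq_sum]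
    rw [uniformExp_sum, Finset.sum_congr rfl fun I hI =>
      uniformExp_of_nonempty (hne I hI) (fun c : ZMod N => if c = y then (1 : ℝ) else 0)]
    simp [div_eq_mul_inv]
  refine ⟨hexp, ?_⟩
  rw [hexp]
  -- the indicator of `y`, centred with respect to the uniform distribution
  set f : ZMod N → ℝ := fun c => (if c = y then (1 : ℝ) else 0) - 1 / N with hf
  have hf1 : ∑ c, f c = 0 := by
    simp [hf, Finset.sum_sub_distrib, ZMod.card, hN0]
  have hf2 : ∑ c, f c * f c = ((N : ℝ) - 1) / N := by
    have : ∀ c, f c * f c = (1 - 2 / N) * (if c = y then (1 : ℝ) else 0) + 1 / (N : ℝ) ^ 2 := by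
      intro c
      simp only [hf]
      split_ifs <;> ring
    simp only [this, Finset.sum_add_distrib, ← Finset.mul_sum]
    simp [ZMod.card]
    field_simp
    ring
  have hsq : ∀ H : Fin T → ZMod N,
      ((tupleCount N ℓ T H y : ℝ) - (T.choose ℓ : ℝ) / N) ^ 2
        = ∑ I ∈ Finset.powersetCard ℓ (Finset.univ : Finset (Fin T)),
          ∑ J ∈ Finset.powersetCard ℓ (Finset.univ : Finset (Fin T)),
            f (∑ k ∈ I, H k) * f (∑ k ∈ J, H k) := by
    intro H
    rw [← Finset.sum_mul_sum, ← sq, tupleCount_eq_sum]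
    simp only [hf, Finset.sum_sub_distrib, Finset.sum_const, hcard, nsmul_eq_mul, mul_one_div]
  have hcov : ∀ I ∈ Finset.powersetCard ℓ (Finset.univ : Finset (Fin T)),
      ∀ J ∈ Finset.powersetCard ℓ (Finset.univ : Finset (Fin T)),
        uniformExp (fun H : Fin T → ZMod N => f (∑ k ∈ I, H k) * f (∑ k ∈ J, H k))
          = if I = J then ((N : ℝ) - 1) / N / N else 0 := by
    intro I hI J hJ
    split_ifs with h
    · subst h
      rw [uniformExp_of_nonempty (hne I hI) (fun c => f c * f c), hf2]
    · have hnot : ¬ I ⊆ J := fun hsub => h <| Finset.eq_of_subset_of_card_le hsub <| by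
        rw [(Finset.mem_powersetCard.mp hI).2, (Finset.mem_powersetCard.mp hJ).2]
      obtain ⟨i, hi, hi'⟩ := Finset.not_subset.mp hnot
      rw [uniformExp_mul_of_mem_of_notMem hi hi', hf1, zero_div, zero_mul]
  simp only [hsq]
  rw [uniformExp_sum]
  simp only [uniformExp_sum]
  rw [Finset.sum_congr rfl fun I hI => Finset.sum_congr rfl fun J hJ => hcov I hI J hJ]
  rw [Finset.sum_congr rfl fun I hI => by rw [Finset.sum_ite_eq, if_pos hI],
    Finset.sum_const, hcard, nsmul_eq_mul]
  field_simp
end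

section
/- Let N ≥ 1, T ≥ 1 and K ≥ 1 be integers. For a uniformly random function H : Fin T → ZMod N, the probability that there exists y ∈ ZMod N such that at least K indices i ∈ Fin T satisfy H i = y is at most N · (choose T K) · (1/N)^K. -/
/-! Union bound: a `K`-multicollision on the value `y` makes `H` constantly `y` on some `K`-element
set `S` of indices. For each of the `N * choose T K` pairs `(y, S)`, the functions equal to `y` on
`S` form a product set with `N ^ (T - K)` elements (`card_const_on`), a fraction `(1 / N) ^ K` of
all `N ^ T` functions. -/

open Finset
open scoped Classical

/-- A fraction `1 / N ^ #S` of all functions is constantly `y` on `S`;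
multiplying by `N ^ #S` avoids the truncated exponent `T - #S`. -/
lemma card_const_on (N T : ℕ) [NeZero N] (y : ZMod N) (S : Finset (Fin T)) :
    (univ.filter (fun H : Fin T → ZMod N => ∀ i ∈ S, H i = y)).card * N ^ S.card = N ^ T := by
  have h : univ.filter (fun H : Fin T → ZMod N => ∀ i ∈ S, H i = y)
      = Fintype.piFinset (fun i => if i ∈ S then {y} else univ) := by
    ext H
    simp only [mem_filter, mem_univ, true_and, Fintype.mem_piFinset]
    refine forall_congr' fun i => ?_
    by_cases hi : i ∈ S <;> simp [hi]
  have hpow : N ^ S.card = ∏ i : Fin T, if i ∈ S then N else 1 := by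
    simp
  rw [h, Fintype.card_piFinset, hpow, ← Finset.prod_mul_distrib]
  have hfac : ∀ i : Fin T, (if i ∈ S then ({y} : Finset (ZMod N)) else univ).card
      * (if i ∈ S then N else 1) = N := by
    intro i
    by_cases hi : i ∈ S <;> simp [hi, ZMod.card]
  simp [hfac]

/-- For a uniformly random `H : Fin T → ZMod N`, the probability that some value `y` has
at least `K` preimages under `H` (a `K`-multicollision) is at most
`N · choose T K · (1/N)^K`. -/
theorem multicollision_bound (N T K : ℕ) [NeZero N] (hN : 1 ≤ N) (hT : 1 ≤ T)
    (hK : 1 ≤ K) :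
    uniformPr (fun H : Fin T → ZMod N =>
        ∃ y : ZMod N, K ≤ (Finset.univ.filter (fun i : Fin T => H i = y)).card)
      ≤ (N : ℝ) * (T.choose K : ℝ) * (1 / (N : ℝ)) ^ K := by
  have hN0 : (0 : ℝ) < N := by exact_mod_cast hN
  set P := (univ : Finset (ZMod N)) ×ˢ powersetCard K (univ : Finset (Fin T)) with hP
  set A : ZMod N × Finset (Fin T) → Finset (Fin T → ZMod N) :=
    fun q => univ.filter (fun H => ∀ i ∈ q.2, H i = q.1) with hA
  have hsub : univ.filter (fun H : Fin T → ZMod N =>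
      ∃ y : ZMod N, K ≤ (univ.filter (fun i : Fin T => H i = y)).card) ⊆ P.biUnion A := by
    intro H hH
    obtain ⟨y, hy⟩ := (mem_filter.1 hH).2
    obtain ⟨S, hS, hSK⟩ := Finset.exists_subset_card_eq hy
    refine mem_biUnion.2 ⟨(y, S), ?_, ?_⟩
    · simp [hP, hSK]
    · exact mem_filter.2 ⟨mem_univ _, fun i hi => (mem_filter.1 (hS hi)).2⟩
  have hcardA : ∀ q ∈ P, ((A q).card : ℝ) = (N : ℝ) ^ T / (N : ℝ) ^ K := by
    intro q hq
    have hqK : q.2.card = K := (mem_powersetCard.1 (mem_product.1 hq).2).2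
    have h := card_const_on N T q.1 q.2
    rw [hqK] at h
    rw [eq_div_iff (by positivity)]
    exact_mod_cast h
  have hcardP : (P.card : ℝ) = N * T.choose K := by
    simp [hP, card_product, card_powersetCard, ZMod.card]
  have hunion : ((univ.filter (fun H : Fin T → ZMod N =>
      ∃ y : ZMod N, K ≤ (univ.filter (fun i : Fin T => H i = y)).card)).card : ℝ)
      ≤ N * T.choose K * ((N : ℝ) ^ T / (N : ℝ) ^ K) := by
    calc _ ≤ ((∑ q ∈ P, (A q).card : ℕ) : ℝ) := by
          exact_mod_cast (card_le_card hsub).trans card_biUnion_le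
      _ = _ := by
          rw [Nat.cast_sum, Finset.sum_congr rfl hcardA, sum_const, nsmul_eq_mul, hcardP]
  have hcard : (Fintype.card (Fin T → ZMod N) : ℝ) = (N : ℝ) ^ T := by
    simp [ZMod.card]
  unfold uniformPr
  rw [hcard, div_le_iff₀ (by positivity)]
  have hrhs : (N : ℝ) * T.choose K * (1 / (N : ℝ)) ^ K * (N : ℝ) ^ T
      = N * T.choose K * ((N : ℝ) ^ T / (N : ℝ) ^ K) := by
    rw [one_div, inv_pow]
    ring
  rw [hrhs]
  -- The two filters differ only in their decidability instances.
  refine le_of_eq_of_le ?_ hunion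
  congr!
end

section
/- Let N ≥ 1, ℓ ≥ 2, T ≥ 1 and k ≥ 1 be integers and fix y ∈ ZMod N. For a uniformly random function H : Fin T → ZMod N, the probability that there are at least k indices that are effective for y under H is at most (choose T k) · ((T^(ℓ−1) : ℝ)/N)^k. -/
/-!
If at least `k` indices are effective, then all indices of some `k`-element set `S` are, so a union
bound over the `choose T k` sets `S` leaves the estimate `(T^(ℓ-1)/N)^k` for a fixed `S`.
An effective index `i` has `H i` in the set of completions `y - ∑ j ∈ J, H j`, where `J` ranges over
the `(ℓ-1)`-subsets of the earlier indices; this set has at most `T^(ℓ-1)` elements and is determined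
by the values of `H` before `i`. Revealing `H` in order, each index of `S` therefore costs a factor
`T^(ℓ-1)/N`; this is `card_forall_mem_mul_le`, an induction on `S` that removes its largest element
by resampling the value of `H` there.
-/

open Finset
open scoped Classical

/-- An index `i` is effective for `y` under `H` if some `(ℓ-1)`-element finset of earlier
indices completes it to an `ℓ`-tuple of sum `y`. -/
def Effective (N ℓ T : ℕ) (H : Fin T → ZMod N) (y : ZMod N) (i : Fin T) : Prop :=
  ∃ J : Finset (Fin T), (∀ j ∈ J, j < i) ∧ J.card = ℓ - 1 ∧ H i + (∑ j ∈ J, H j) = y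

/-- Chain rule for a uniformly random `H`, in counting form: if the sets `A i H` have at most `M`
elements and depend only on the values of `H` before `i` (they are unchanged when `H` is modified at
some `a ≥ i`), then `H i ∈ A i H` holds for all `i ∈ S` with probability at most `(M/|α|)^|S|`. -/
lemma card_forall_mem_mul_le {T M : ℕ} {α : Type*} [Fintype α]
    (A : Fin T → (Fin T → α) → Finset α)
    (hA : ∀ i a H z, i ≤ a → A i (Function.update H a z) = A i H)
    (hM : ∀ i H, (A i H).card ≤ M) (S : Finset (Fin T)) :
    (univ.filter (fun H : Fin T → α => ∀ i ∈ S, H i ∈ A i H)).card * Fintype.card α ^ S.card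
      ≤ M ^ S.card * Fintype.card (Fin T → α) := by
  induction S using Finset.induction_on_max with
  | empty => simp [Finset.card_univ]
  | insert a S hS ih =>
    have haS : a ∉ S := fun h => lt_irrefl _ (hS a h)
    set B := univ.filter (fun H : Fin T → α => ∀ i ∈ S, H i ∈ A i H) with hB
    set C := univ.filter (fun H : Fin T → α => ∀ i ∈ insert a S, H i ∈ A i H) with hC
    -- Resampling `H` at `a` maps `C × α` to `B`; a fibre over `G` is determined by the old value
    -- `H a`, which lies in `A a H = A a G`.
    have key : (C ×ˢ (univ : Finset α)).card ≤ M * B.card := by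
      refine Finset.card_le_mul_card_image_of_maps_to
        (f := fun p : (Fin T → α) × α => Function.update p.1 a p.2) ?_ M ?_
      · rintro ⟨H, z⟩ hp
        simp only [hC, hB, mem_product, mem_filter, mem_univ, true_and, and_true] at hp ⊢
        intro i hi
        rw [hA i a H z (hS i hi).le, Function.update_of_ne (hS i hi).ne]
        exact hp i (mem_insert_of_mem hi)
      · intro G _
        refine le_trans (Finset.card_le_card_of_injOn (fun p => p.1 a) ?_ ?_) (hM a G)
        · rintro ⟨H, z⟩ hp
          simp only [hC, coe_filter, mem_product, mem_filter, mem_univ, true_and, and_true,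
            Set.mem_ofPred_eq] at hp
          obtain ⟨hp, rfl⟩ := hp
          simp only [mem_coe]
          rw [hA a a H z le_rfl]
          exact hp a (mem_insert_self _ _)
        · rintro ⟨H, z⟩ hp ⟨H', z'⟩ hp' h
          simp only [coe_filter, Set.mem_ofPred_eq] at hp hp' h
          have e := hp.2.trans hp'.2.symm
          have hz : z = z' := by simpa using congrFun e a
          have hH : H = H' := by
            funext i
            by_cases hi : i = a
            · rw [hi, h]
            · simpa [hi] using congrFun e i
          rw [hz, hH]
    rw [card_product, Finset.card_univ] at key
    rw [card_insert_of_notMem haS]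
    calc C.card * Fintype.card α ^ (S.card + 1)
        = (C.card * Fintype.card α) * Fintype.card α ^ S.card := by ring
      _ ≤ (M * B.card) * Fintype.card α ^ S.card := Nat.mul_le_mul_right _ key
      _ = M * (B.card * Fintype.card α ^ S.card) := by ring
      _ ≤ M * (M ^ S.card * Fintype.card (Fin T → α)) := Nat.mul_le_mul_left _ ih
      _ = _ := by ring

lemma card_forall_effective_mul_le (N ℓ T : ℕ) [NeZero N] (y : ZMod N) (S : Finset (Fin T)) :
    (univ.filter (fun H : Fin T → ZMod N => ∀ i ∈ S, Effective N ℓ T H y i)).card * N ^ S.card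
      ≤ (T ^ (ℓ - 1)) ^ S.card * Fintype.card (Fin T → ZMod N) := by
  have h := card_forall_mem_mul_le (M := T ^ (ℓ - 1))
    (fun i (H : Fin T → ZMod N) =>
      ((Iio i).powersetCard (ℓ - 1)).image (fun J => y - ∑ j ∈ J, H j)) ?_ ?_ S
  · rw [ZMod.card] at h
    refine le_trans (Nat.mul_le_mul_right _ (card_le_card ?_)) h
    intro H hH
    simp only [mem_filter, mem_univ, true_and] at hH ⊢
    intro i hi
    obtain ⟨J, hJ, hc, hs⟩ := hH i hi
    refine mem_image.2 ⟨J, mem_powersetCard.2 ⟨fun j hj => mem_Iio.2 (hJ j hj), hc⟩, ?_⟩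
    rw [← hs]; ring
  · intro i a H z hia
    refine image_congr fun J hJ => ?_
    have hJ' := (mem_powersetCard.1 (mem_coe.1 hJ)).1
    congr 1
    refine sum_congr rfl fun j hj => Function.update_of_ne ?_ _ _
    exact ((mem_Iio.1 (hJ' hj)).trans_le hia).ne
  · intro i H
    refine card_image_le.trans ?_
    rw [card_powersetCard, Fin.card_Iio]
    exact (Nat.choose_le_pow _ _).trans (Nat.pow_le_pow_left i.2.le _)

/-- For a uniformly random `H : Fin T → ZMod N`, the probability that at least `k`
indices are effective for `y` under `H` is at most `choose T k · (T^(ℓ-1)/N)^k`. -/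
theorem effective_queries_tail_bound (N ℓ T k : ℕ) [NeZero N] (hN : 1 ≤ N) (hℓ : 2 ≤ ℓ)
    (hT : 1 ≤ T) (hk : 1 ≤ k) (y : ZMod N) :
    uniformPr (fun H : Fin T → ZMod N =>
        k ≤ (Finset.univ.filter (fun i : Fin T => Effective N ℓ T H y i)).card)
      ≤ (T.choose k : ℝ) * ((T : ℝ) ^ (ℓ - 1) / (N : ℝ)) ^ k := by
  have hunion : (univ.filter (fun H : Fin T → ZMod N =>
        k ≤ (univ.filter (fun i : Fin T => Effective N ℓ T H y i)).card)).card * N ^ k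
      ≤ T.choose k * ((T ^ (ℓ - 1)) ^ k * Fintype.card (Fin T → ZMod N)) := by
    have hsub : univ.filter (fun H : Fin T → ZMod N =>
          k ≤ (univ.filter (fun i : Fin T => Effective N ℓ T H y i)).card)
        ⊆ (powersetCard k (univ : Finset (Fin T))).biUnion (fun S =>
          univ.filter (fun H : Fin T → ZMod N => ∀ i ∈ S, Effective N ℓ T H y i)) := by
      intro H hH
      simp only [mem_filter, mem_univ, true_and] at hH
      obtain ⟨S, hS, hc⟩ := exists_subset_card_eq hH
      refine mem_biUnion.2 ⟨S, mem_powersetCard.2 ⟨subset_univ _, hc⟩, ?_⟩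
      simp only [mem_filter, mem_univ, true_and]
      exact fun i hi => (mem_filter.1 (hS hi)).2
    refine (Nat.mul_le_mul_right _ ((card_le_card hsub).trans card_biUnion_le)).trans ?_
    rw [sum_mul]
    refine (sum_le_card_nsmul _ _ ((T ^ (ℓ - 1)) ^ k * Fintype.card (Fin T → ZMod N)) ?_).trans ?_
    · intro S hS
      have h := card_forall_effective_mul_le N ℓ T y S
      rwa [(mem_powersetCard.1 hS).2] at h
    · simp
  have hNpos : (0 : ℝ) < (N : ℝ) ^ k := by positivity
  have hcard : (0 : ℝ) < (Fintype.card (Fin T → ZMod N) : ℝ) := by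
    exact_mod_cast Fintype.card_pos
  unfold uniformPr
  rw [div_pow, ← mul_div_assoc, div_le_div_iff₀ hcard hNpos, mul_assoc]
  norm_cast
  -- The two filters differ only in their decidability instances.
  convert hunion
end

section
/- Let E be a finite-dimensional complex inner product space, let P and Q be orthogonal projections on E, let k ≥ 1 be an integer, and let v ∈ E with ‖v‖ = 1 and Q v = v. Then ‖P v‖² ≤ (‖(P ∘ Q)^k v‖²)^(1/(2k−1)), where (P ∘ Q)^k denotes the k-fold composition of P ∘ Q and the outer exponent 1/(2k−1) is a real power. -/
/-!
The Jordan decomposition is avoided. Apply `P` and `Q` alternately to `v`, giving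
`w₀ = v = Q v`, `w₁ = P v`, `w₂ = Q P v`, …, so that `(P Q)^k v = w_{2k-1}`.
Since `wₙ` is fixed by the projection `R'` producing `wₙ₊₂ = R' wₙ₊₁`, while `wₙ₊₁ = R wₙ`,
`‖wₙ₊₁‖² = ⟪wₙ, wₙ₊₁⟫ = ⟪wₙ, wₙ₊₂⟫ ≤ ‖wₙ‖ ‖wₙ₊₂‖`:
the norms are log-convex, so the ratios `‖wₙ₊₁‖ / ‖wₙ‖` never drop below the first one, `‖P v‖`
(`ratio_step`). Hence `‖P v‖ ^ (2k-1) ≤ ‖w_{2k-1}‖` (`norm_alternating_bounds`), and taking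
roots gives the bound.
-/

/-- Log-convexity of the norms along alternating projections, in ratio form: if the first
projection shrinks the `R'`-fixed vector `x` by a factor at least `c`, so does the next one. -/
lemma ratio_step {E : Type*} [NormedAddCommGroup E] [InnerProductSpace ℂ E]
    (R R' : E →ₗ[ℂ] E) (hRidem : R ∘ₗ R = R) (hRsym : LinearMap.IsSymmetric R)
    (hR'sym : LinearMap.IsSymmetric R') {x : E} (hx : R' x = x) {c : ℝ}
    (h : c * ‖x‖ ≤ ‖R x‖) : c * ‖R x‖ ≤ ‖R' (R x)‖ := by
  have hRR : R (R x) = R x := LinearMap.congr_fun hRidem x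
  have hinner : inner ℂ (R x) (R x) = inner ℂ x (R' (R x)) := by
    rw [hRsym x (R x), hRR, ← hR'sym x (R x), hx]
  have hsq : ‖R x‖ ^ 2 ≤ ‖x‖ * ‖R' (R x)‖ := by
    calc ‖R x‖ ^ 2 = ‖inner ℂ (R x) (R x)‖ := by
          rw [inner_self_eq_norm_sq_to_K]; simp
      _ = ‖inner ℂ x (R' (R x))‖ := by rw [hinner]
      _ ≤ _ := norm_inner_le_norm _ _
  rcases (norm_nonneg (R x)).eq_or_lt with h0 | hpos
  · rw [← h0]; simp
  rcases le_or_gt c 0 with hc | hc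
  · exact (mul_nonpos_of_nonpos_of_nonneg hc hpos.le).trans (norm_nonneg _)
  refine le_of_mul_le_mul_right ?_ hpos
  calc c * ‖R x‖ * ‖R x‖ = c * ‖R x‖ ^ 2 := by ring
    _ ≤ c * (‖x‖ * ‖R' (R x)‖) := by gcongr
    _ = c * ‖x‖ * ‖R' (R x)‖ := by ring
    _ ≤ ‖R x‖ * ‖R' (R x)‖ := by gcongr
    _ = ‖R' (R x)‖ * ‖R x‖ := mul_comm _ _

/-- The norm bound at the even-length word `Q (P Q)^j v`, together with the ratio bound for
the next application of `P`; the latter is what makes the induction close. -/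
lemma norm_alternating_bounds {E : Type*} [NormedAddCommGroup E] [InnerProductSpace ℂ E]
    (P Q : E →ₗ[ℂ] E)
    (hPidem : P ∘ₗ P = P) (hPsym : LinearMap.IsSymmetric P)
    (hQidem : Q ∘ₗ Q = Q) (hQsym : LinearMap.IsSymmetric Q)
    (v : E) (hv : ‖v‖ = 1) (hQv : Q v = v) (j : ℕ) :
    ‖P v‖ ^ (2 * j) ≤ ‖Q (((P ∘ₗ Q) ^ j) v)‖ ∧
      ‖P v‖ * ‖Q (((P ∘ₗ Q) ^ j) v)‖ ≤ ‖P (Q (((P ∘ₗ Q) ^ j) v))‖ := by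
  induction j with
  | zero => simp [hQv, hv]
  | succ j ih =>
    obtain ⟨hpow, hratio⟩ := ih
    rw [pow_succ' (P ∘ₗ Q), Module.End.mul_apply, LinearMap.comp_apply]
    set x := Q (((P ∘ₗ Q) ^ j) v)
    have hQx : Q x = x := LinearMap.congr_fun hQidem _
    have hPx : P (P x) = P x := LinearMap.congr_fun hPidem x
    have h1 := ratio_step P Q hPidem hPsym hQsym hQx hratio
    have h2 := ratio_step Q P hQidem hQsym hPsym hPx h1
    refine ⟨?_, h2⟩
    calc ‖P v‖ ^ (2 * (j + 1)) = ‖P v‖ * (‖P v‖ * ‖P v‖ ^ (2 * j)) := by ring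
      _ ≤ ‖P v‖ * (‖P v‖ * ‖x‖) := by gcongr
      _ ≤ ‖P v‖ * ‖P x‖ := by gcongr
      _ ≤ ‖Q (P x)‖ := h1

/-- Two-projection amplification bound: if `P` and `Q` are orthogonal projections on a
finite-dimensional complex inner product space, `k ≥ 1`, and `v` is a unit vector fixed
by `Q`, then `‖P v‖² ≤ (‖(P Q)^k v‖²)^(1/(2k-1))`. -/
theorem two_projection_power_bound {E : Type*} [NormedAddCommGroup E]
    [InnerProductSpace ℂ E] [FiniteDimensional ℂ E]
    (P Q : E →ₗ[ℂ] E)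
    (hPidem : P ∘ₗ P = P) (hPsym : LinearMap.IsSymmetric P)
    (hQidem : Q ∘ₗ Q = Q) (hQsym : LinearMap.IsSymmetric Q)
    (k : ℕ) (hk : 1 ≤ k) (v : E) (hv : ‖v‖ = 1) (hQv : Q v = v) :
    ‖P v‖ ^ 2 ≤ (‖((P ∘ₗ Q) ^ k) v‖ ^ 2) ^ ((1 : ℝ) / (2 * (k : ℝ) - 1)) := by
  obtain ⟨j, rfl⟩ : ∃ j, k = j + 1 := ⟨k - 1, by omega⟩
  obtain ⟨hpow, hratio⟩ :=
    norm_alternating_bounds P Q hPidem hPsym hQidem hQsym v hv hQv j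
  have hbound : ‖P v‖ ^ (2 * j + 1) ≤ ‖((P ∘ₗ Q) ^ (j + 1)) v‖ := by
    rw [pow_succ' (P ∘ₗ Q), Module.End.mul_apply, LinearMap.comp_apply]
    calc ‖P v‖ ^ (2 * j + 1) = ‖P v‖ * ‖P v‖ ^ (2 * j) := by ring
      _ ≤ ‖P v‖ * ‖Q (((P ∘ₗ Q) ^ j) v)‖ := by gcongr
      _ ≤ _ := hratio
  have hexp : (1 : ℝ) / (2 * ((j + 1 : ℕ) : ℝ) - 1) = ((2 * j + 1 : ℕ) : ℝ)⁻¹ := by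
    rw [one_div]; push_cast; congr 1; ring
  rw [hexp]
  calc ‖P v‖ ^ 2 = ((‖P v‖ ^ 2) ^ (2 * j + 1)) ^ (((2 * j + 1 : ℕ) : ℝ)⁻¹) :=
        (Real.pow_rpow_inv_natCast (by positivity) (by omega)).symm
    _ = ((‖P v‖ ^ (2 * j + 1)) ^ 2) ^ (((2 * j + 1 : ℕ) : ℝ)⁻¹) := by
        rw [pow_right_comm]
    _ ≤ _ := by gcongr
end

section
/- Let E be a finite-dimensional complex inner product space, let P and Q be orthogonal projections on E, and let v ∈ E with ‖v‖ = 1 and Q v = v. Then for every integer k ≥ 2, ‖(P ∘ Q)^k v‖⁴ ≤ ‖(P ∘ Q)^(k−1) v‖² · ‖(P ∘ Q)^(k+1) v‖². In particular, whenever the relevant norms are nonzero, the ratios ‖(P ∘ Q)^k v‖² / ‖(P ∘ Q)^(k−1) v‖² are nondecreasing in k for k ≥ 2. -/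
/-!
The argument avoids the Jordan decomposition: on the range of `P` the map `P ∘ Q` is symmetric,
since it agrees there with the self-adjoint compression `P Q P`. For `k ≥ 2` the vector
`x = (P Q)^(k-1) v` lies in that range, hence `‖P Q x‖² = ⟪x, (P Q)² x⟫`, and the Cauchy–Schwarz
inequality gives `‖P Q x‖² ≤ ‖x‖ ‖(P Q)² x‖`. Squaring yields the log-convexity inequality, and
dividing yields the monotonicity of the ratios.
-/

/-- Cauchy–Schwarz for the compression `P Q P` at a vector `x` fixed by `P`. -/
theorem norm_sq_alternating_le {E : Type*} [NormedAddCommGroup E] [InnerProductSpace ℂ E]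
    (P Q : E →ₗ[ℂ] E) (hPidem : P ∘ₗ P = P) (hPsym : LinearMap.IsSymmetric P)
    (hQsym : LinearMap.IsSymmetric Q) (x : E) (hx : P x = x) :
    ‖P (Q x)‖ ^ 2 ≤ ‖x‖ * ‖P (Q (P (Q x)))‖ := by
  have hPP : ∀ y, P (P y) = P y := fun y => LinearMap.congr_fun hPidem y
  have h : inner ℂ (P (Q x)) (P (Q x)) = inner ℂ x (P (Q (P (Q x)))) := by
    rw [hPsym (Q x), hPP, hQsym x, ← hPsym x, hx]
  rw [← inner_self_eq_norm_sq (𝕜 := ℂ), h]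
  exact re_inner_le_norm x _

/-- Log-convexity of the alternating projection norms: if `P` and `Q` are orthogonal
projections on a finite-dimensional complex inner product space and `v` is a unit vector
fixed by `Q`, then for every `k ≥ 2`,
`‖(PQ)^k v‖⁴ ≤ ‖(PQ)^(k-1) v‖² · ‖(PQ)^(k+1) v‖²`; in particular whenever the relevant
norms are nonzero the successive ratios `‖(PQ)^k v‖²/‖(PQ)^(k-1) v‖²` are
nondecreasing. -/
theorem alternating_projection_log_convex {E : Type*} [NormedAddCommGroup E]
    [InnerProductSpace ℂ E] [FiniteDimensional ℂ E]
    (P Q : E →ₗ[ℂ] E)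
    (hPidem : P ∘ₗ P = P) (hPsym : LinearMap.IsSymmetric P)
    (hQidem : Q ∘ₗ Q = Q) (hQsym : LinearMap.IsSymmetric Q)
    (v : E) (hv : ‖v‖ = 1) (hQv : Q v = v) (k : ℕ) (hk : 2 ≤ k) :
    ‖((P ∘ₗ Q) ^ k) v‖ ^ 4
      ≤ ‖((P ∘ₗ Q) ^ (k - 1)) v‖ ^ 2 * ‖((P ∘ₗ Q) ^ (k + 1)) v‖ ^ 2
    ∧ (‖((P ∘ₗ Q) ^ (k - 1)) v‖ ≠ 0 → ‖((P ∘ₗ Q) ^ k) v‖ ≠ 0 →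
        ‖((P ∘ₗ Q) ^ k) v‖ ^ 2 / ‖((P ∘ₗ Q) ^ (k - 1)) v‖ ^ 2
          ≤ ‖((P ∘ₗ Q) ^ (k + 1)) v‖ ^ 2 / ‖((P ∘ₗ Q) ^ k) v‖ ^ 2) := by
  obtain ⟨m, rfl⟩ : ∃ m, k = m + 2 := ⟨k - 2, by omega⟩
  have hPP : ∀ y, P (P y) = P y := fun y => LinearMap.congr_fun hPidem y
  have hstep : ∀ n, ((P ∘ₗ Q) ^ (n + 1)) v = P (Q (((P ∘ₗ Q) ^ n) v)) := fun n => by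
    rw [pow_succ', Module.End.mul_apply, LinearMap.comp_apply]
  have hfix : P (((P ∘ₗ Q) ^ (m + 1)) v) = ((P ∘ₗ Q) ^ (m + 1)) v := by
    rw [hstep, hPP]
  have key := norm_sq_alternating_le P Q hPidem hPsym hQsym _ hfix
  rw [← hstep, ← hstep] at key
  have hmain : ‖((P ∘ₗ Q) ^ (m + 2)) v‖ ^ 4
      ≤ ‖((P ∘ₗ Q) ^ (m + 1)) v‖ ^ 2 * ‖((P ∘ₗ Q) ^ (m + 2 + 1)) v‖ ^ 2 := by
    calc ‖((P ∘ₗ Q) ^ (m + 2)) v‖ ^ 4 = (‖((P ∘ₗ Q) ^ (m + 2)) v‖ ^ 2) ^ 2 := by ring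
      _ ≤ (‖((P ∘ₗ Q) ^ (m + 1)) v‖ * ‖((P ∘ₗ Q) ^ (m + 2 + 1)) v‖) ^ 2 :=
        pow_le_pow_left₀ (by positivity) key 2
      _ = _ := by ring
  rw [show m + 2 - 1 = m + 1 by omega]
  refine ⟨hmain, fun h₁ h₂ => ?_⟩
  rw [div_le_div_iff₀ (by positivity) (by positivity)]
  linarith
end

section
/- Let E be a complex inner product space, let m ≥ 1 be an integer, fix an index i ∈ Fin m, and let ψ : (Fin m → Bool) → E be any family of vectors. Define Φ : (Fin m → Bool) → E by Φ(r) = 2^(−m) · ∑_{g : Fin m → Bool} (−1)^(⟨g,r⟩) · ψ(g), where ⟨g,r⟩ denotes the parity of the number of indices j with g j = true and r j = true. Then ∑_{r : r i = true} ‖Φ(r)‖² = (1/(4 · 2^m)) · ∑_{g : Fin m → Bool} ‖ψ(g[i := false]) − ψ(g[i := true])‖², where g[i := b] denotes the function equal to g except that its value at index i is b. -/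
/-!
Flipping the `i`-th bit of `g` multiplies the character `(-1)^⟨g,r⟩` by `-1` when `r i = true` and
leaves it unchanged otherwise. Hence the unnormalized Walsh–Hadamard transform of the difference
`φ(g) = ψ(g) - ψ(flip_i g)` is `2 ∑_g (-1)^⟨g,r⟩ ψ(g)` at each `r` with `r i = true` and vanishes at
the remaining `r` (`walsh_sum_sub_flip`). Parseval (`walsh_parseval`), applied to `φ`, then gives the
identity, since `‖φ(g)‖ = ‖ψ(g[i := false]) - ψ(g[i := true])‖`.
-/

open Finset
open scoped Classical

/-- The Walsh character `(-1)^⟨g,r⟩`, as a real number. -/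
noncomputable def walshChar {m : ℕ} (g r : Fin m → Bool) : ℝ :=
  (-1 : ℝ) ^ ((Finset.univ.filter (fun j : Fin m => g j = true ∧ r j = true)).card)

/-- `g` with its `i`-th bit negated. -/
def flipBit {m : ℕ} (i : Fin m) (g : Fin m → Bool) : Fin m → Bool :=
  Function.update g i (!g i)

lemma flipBit_involutive {m : ℕ} (i : Fin m) : Function.Involutive (flipBit i) := by
  intro g
  simp [flipBit]

lemma walshChar_eq_prod {m : ℕ} (g r : Fin m → Bool) :
    walshChar g r = ∏ j, (if g j = true ∧ r j = true then (-1 : ℝ) else 1) := by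
  rw [walshChar, Finset.prod_ite]
  simp

lemma walshChar_flipBit {m : ℕ} (i : Fin m) (g r : Fin m → Bool) :
    walshChar (flipBit i g) r = (if r i = true then -1 else 1) * walshChar g r := by
  rw [walshChar_eq_prod, walshChar_eq_prod, ← Finset.mul_prod_erase _ _ (Finset.mem_univ i),
    ← Finset.mul_prod_erase _ (fun j => if g j = true ∧ r j = true then (-1 : ℝ) else 1)
      (Finset.mem_univ i), ← mul_assoc]
  congr 1
  · cases hg : g i <;> cases hr : r i <;> simp [flipBit, hg]
  · refine Finset.prod_congr rfl fun j hj => ?_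
    simp [flipBit, Function.update_of_ne (Finset.ne_of_mem_erase hj)]

/-- Orthogonality of the Walsh characters; the sum over `r` factors over the coordinates. -/
lemma walshChar_orthogonal {m : ℕ} (g h : Fin m → Bool) :
    ∑ r, walshChar g r * walshChar h r = if g = h then (2 : ℝ) ^ m else 0 := by
  simp only [walshChar_eq_prod, ← Finset.prod_mul_distrib]
  rw [← Fintype.prod_sum (fun j (b : Bool) => (if g j = true ∧ b = true then (-1 : ℝ) else 1) *
    (if h j = true ∧ b = true then (-1 : ℝ) else 1))]
  split_ifs with hgh
  · subst hgh
    have key : ∀ j, ∑ b : Bool, (if g j = true ∧ b = true then (-1 : ℝ) else 1) *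
        (if g j = true ∧ b = true then (-1 : ℝ) else 1) = 2 := by
      intro j
      cases g j <;> norm_num
    simp only [key, Finset.prod_const, Finset.card_univ, Fintype.card_fin]
  · obtain ⟨j, hj⟩ := Function.ne_iff.mp hgh
    apply Finset.prod_eq_zero (Finset.mem_univ j)
    cases hg : g j <;> cases hh : h j <;> simp_all

lemma walsh_parseval {E : Type*} [NormedAddCommGroup E] [InnerProductSpace ℝ E] {m : ℕ}
    (φ : (Fin m → Bool) → E) :
    ∑ r, ‖∑ g, walshChar g r • φ g‖ ^ 2 = (2 : ℝ) ^ m * ∑ g, ‖φ g‖ ^ 2 := by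
  have expand : ∀ r, ‖∑ g, walshChar g r • φ g‖ ^ 2
      = ∑ g, ∑ h, (walshChar g r * walshChar h r) * inner ℝ (φ g) (φ h) := by
    intro r
    rw [← real_inner_self_eq_norm_sq, sum_inner]
    refine Finset.sum_congr rfl fun g _ => ?_
    rw [inner_sum]
    refine Finset.sum_congr rfl fun h _ => ?_
    rw [real_inner_smul_left, real_inner_smul_right, mul_assoc]
  simp only [expand]
  rw [Finset.sum_comm, Finset.mul_sum]
  refine Finset.sum_congr rfl fun g _ => ?_
  rw [Finset.sum_comm]
  simp only [← Finset.sum_mul, walshChar_orthogonal, ite_mul, zero_mul, Finset.sum_ite_eq,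
    Finset.mem_univ, if_true, real_inner_self_eq_norm_sq]

lemma walsh_sum_sub_flip {E : Type*} [NormedAddCommGroup E] [InnerProductSpace ℝ E] {m : ℕ}
    (i : Fin m) (ψ : (Fin m → Bool) → E) (r : Fin m → Bool) :
    ∑ g, walshChar g r • (ψ g - ψ (flipBit i g))
      = if r i = true then (2 : ℝ) • ∑ g, walshChar g r • ψ g else 0 := by
  have reindex : ∑ g, walshChar g r • ψ (flipBit i g)
      = (if r i = true then (-1 : ℝ) else 1) • ∑ g, walshChar g r • ψ g := by
    rw [← Equiv.sum_comp (flipBit_involutive i).toPerm, Finset.smul_sum]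
    refine Finset.sum_congr rfl fun g _ => ?_
    simp only [Function.Involutive.coe_toPerm, flipBit_involutive i g, walshChar_flipBit,
      smul_smul]
  simp only [smul_sub, Finset.sum_sub_distrib, reindex]
  split_ifs
  · rw [neg_one_smul, sub_neg_eq_add, two_smul]
  · rw [one_smul, sub_self]

lemma norm_sub_flipBit {E : Type*} [NormedAddCommGroup E] {m : ℕ}
    (i : Fin m) (ψ : (Fin m → Bool) → E) (g : Fin m → Bool) :
    ‖ψ g - ψ (flipBit i g)‖
      = ‖ψ (Function.update g i false) - ψ (Function.update g i true)‖ := by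
  have hg : Function.update g i (g i) = g := Function.update_eq_self i g
  cases h : g i
  · rw [h] at hg
    simp [flipBit, h, hg]
  · rw [h] at hg
    rw [norm_sub_rev]
    simp [flipBit, h, hg]

/-- Hadamard-basis identity: for any family `ψ : (Fin m → Bool) → E` and
`Φ(r) = 2^{-m} ∑_g (-1)^{⟨g,r⟩} ψ(g)`, the total squared norm of the components `Φ(r)`
over outcomes `r` with `r i = true` equals
`(1/(4·2^m)) ∑_g ‖ψ(g[i := false]) - ψ(g[i := true])‖²`. -/
theorem hadamard_flip_identity {E : Type*} [NormedAddCommGroup E]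
    [InnerProductSpace ℂ E] (m : ℕ) (hm : 1 ≤ m) (i : Fin m)
    (ψ : (Fin m → Bool) → E) :
    (∑ r ∈ Finset.univ.filter (fun r : Fin m → Bool => r i = true),
        ‖((2 : ℝ) ^ m)⁻¹ • ∑ g : Fin m → Bool,
            ((-1 : ℝ) ^ ((Finset.univ.filter
                (fun j : Fin m => g j = true ∧ r j = true)).card)) • ψ g‖ ^ 2)
      = (1 / (4 * (2 : ℝ) ^ m)) * ∑ g : Fin m → Bool,
          ‖ψ (Function.update g i false) - ψ (Function.update g i true)‖ ^ 2 := by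
  let _ : InnerProductSpace ℝ E := InnerProductSpace.rclikeToReal ℂ E
  have parseval := walsh_parseval (fun g => ψ g - ψ (flipBit i g))
  simp only [walsh_sum_sub_flip, norm_sub_flipBit] at parseval
  have key : (4 : ℝ) * ∑ r ∈ Finset.univ.filter (fun r : Fin m → Bool => r i = true),
      ‖∑ g, walshChar g r • ψ g‖ ^ 2 = (2 : ℝ) ^ m * ∑ g : Fin m → Bool,
        ‖ψ (Function.update g i false) - ψ (Function.update g i true)‖ ^ 2 := by
    rw [← parseval, Finset.mul_sum, Finset.sum_filter]
    refine Finset.sum_congr rfl fun r _ => ?_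
    split_ifs
    · rw [norm_smul, mul_pow]
      norm_num
    · simp
  change ∑ r ∈ Finset.univ.filter (fun r : Fin m → Bool => r i = true),
    ‖((2 : ℝ) ^ m)⁻¹ • ∑ g, walshChar g r • ψ g‖ ^ 2 = _
  simp only [norm_smul, mul_pow, ← Finset.mul_sum]
  have norm_two : ‖((2 : ℝ) ^ m)⁻¹‖ = ((2 : ℝ) ^ m)⁻¹ := Real.norm_of_nonneg (by positivity)
  rw [norm_two]
  have hpos : (2 : ℝ) ^ m ≠ 0 := by positivity
  field_simp
  linear_combination key
end
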